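/- Let N ≥ 2 and let m : 𝕋 → ℂ be continuous. Let S be the bounded operator on L²(𝕋, μ) (μ the normalized Haar measure on the circle) defined by (S f)(z) = m(z) f(z^N). Then the Hilbert-space adjoint S* of S is given, for every f ∈ L²(𝕋, μ), by (S* f)(z) = (1/N) ∑_{w ∈ 𝕋, w^N = z} conj(m(w)) f(w) for μ-almost every z ∈ 𝕋. -/

import Mathlib

open MeasureTheory

noncomputable instance : MeasurableSpace Circle := borel Circle
instance : BorelSpace Circle := ⟨rfl⟩


noncomputable instance auxFintype (N : ℕ) [NeZero N] : Fintype (rootsOfUnity N Circle) :=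
  have : Finite (rootsOfUnity N Circle) :=
    Finite.of_equiv _ (rootsOfUnityCircleEquiv N).toEquiv.symm
  Fintype.ofFinite _

open Classical in
theorem aux_finsum (N : ℕ) [NeZero N] (g : Circle → ℂ) (z : Circle) :
    ∑ᶠ w ∈ {w : Circle | w ^ N = z ^ N}, g w
      = ∑ ζ : rootsOfUnity N Circle, g (((ζ : Circleˣ) : Circle) * z) := by
  have hinj : Function.Injective
      (fun ζ : rootsOfUnity N Circle => ((ζ : Circleˣ) : Circle) * z) := by
    intro a b hab
    have h := mul_right_cancel hab
    exact Subtype.ext (Units.ext h)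
  have hset : {w : Circle | w ^ N = z ^ N} =
      ((Finset.univ.image
        (fun ζ : rootsOfUnity N Circle => ((ζ : Circleˣ) : Circle) * z) : Finset Circle) :
          Set Circle) := by
    ext w
    simp only [Set.mem_ofPred_eq, Finset.coe_image, Finset.coe_univ, Set.image_univ, Set.mem_range]
    constructor
    · intro h
      have h1 : (w * z⁻¹) ^ N = 1 := by
        rw [mul_pow, h, ← mul_pow, mul_inv_cancel, one_pow]
      refine ⟨⟨toUnits (w * z⁻¹), ?_⟩, ?_⟩
      · rw [mem_rootsOfUnity, ← map_pow, h1, map_one]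
      · simp
    · rintro ⟨ζ, rfl⟩
      have h := ζ.2
      rw [mem_rootsOfUnity] at h
      have h2 : ((ζ : Circleˣ) : Circle) ^ N = 1 := by
        rw [← Units.val_pow_eq_pow_val, h, Units.val_one]
      rw [mul_pow, h2, one_mul]
  rw [hset, finsum_mem_coe_finset, Finset.sum_image (fun a _ b _ h => hinj h)]

theorem aux_card (N : ℕ) [NeZero N] : Fintype.card (rootsOfUnity N Circle) = N := by
  rw [← Nat.card_eq_fintype_card, Nat.card_congr (rootsOfUnityCircleEquiv N).toEquiv]
  exact Complex.card_rootsOfUnity N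

theorem aux_section (N : ℕ) (hN : N ≠ 0) :
    ∃ s : Circle → Circle, Measurable s ∧ ∀ z, s z ^ N = z := by
  refine ⟨fun z => Circle.exp (Complex.arg z / N), ?_, ?_⟩
  · refine Circle.exp.continuous.measurable.comp ?_
    exact (Complex.measurable_arg.comp (by fun_prop : Continuous (fun z : Circle => (z : ℂ))).measurable).div_const _
  · intro z
    have hN' : (N : ℝ) ≠ 0 := by exact_mod_cast hN
    dsimp only
    rw [← Circle.exp_natCast_mul]
    rw [mul_div_cancel₀ _ hN', Circle.exp_arg]

theorem aux_mp (N : ℕ) (hN : N ≠ 0) (μ : Measure Circle) [μ.IsHaarMeasure] :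
    MeasurePreserving (fun z : Circle => z ^ N) μ μ := by
  obtain ⟨s, -, hs⟩ := aux_section N hN
  exact (powMonoidHom N : Circle →* Circle).measurePreserving (μ := μ) (ν := μ)
    (continuous_pow N) (fun z => ⟨s z, hs z⟩) rfl

/- STATEMENT 4: For a continuous `m` on the circle and `(S f)(z) = m(z) f(z^N)` on
`L²(𝕋, μ)` (μ normalized Haar measure), the adjoint is given by
`(S* f)(z) = (1/N) ∑_{w^N = z} conj(m(w)) f(w)` for μ-a.e. `z`. -/
theorem stmt4 (N : ℕ) (hN : 2 ≤ N) (μ : Measure Circle) [μ.IsHaarMeasure]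
    [IsProbabilityMeasure μ]
    (m : Circle → ℂ) (hm : Continuous m)
    (S : Lp ℂ 2 μ →L[ℂ] Lp ℂ 2 μ)
    (hS : ∀ f : Lp ℂ 2 μ,
      (S f : Circle → ℂ) =ᵐ[μ] fun z => m z * (f : Circle → ℂ) (z ^ N)) :
    ∀ f : Lp ℂ 2 μ,
      (ContinuousLinearMap.adjoint S f : Circle → ℂ) =ᵐ[μ]
        fun z => (N : ℂ)⁻¹ *
          ∑ᶠ w ∈ {w : Circle | w ^ N = z}, (starRingEnd ℂ) (m w) * (f : Circle → ℂ) w := by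
  intro f
  have hN0 : N ≠ 0 := by omega
  have : NeZero N := ⟨hN0⟩
  obtain ⟨s, hsm, hs⟩ := aux_section N hN0
  have hp := aux_mp N hN0 μ
  set g : Circle → ℂ := fun w => (starRingEnd ℂ) (m w) * (f : Circle → ℂ) w with hg
  have hgm : StronglyMeasurable g :=
    (Complex.continuous_conj.comp hm).stronglyMeasurable.mul (Lp.stronglyMeasurable f)
  have hgL : MemLp g 2 μ := by
    obtain ⟨C, hC⟩ := isCompact_univ.exists_bound_of_continuousOn hm.continuousOn
    refine (Lp.memLp f).of_le_mul (c := C) hgm.aestronglyMeasurable (.of_forall fun z => ?_)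
    simp only [hg, norm_mul, RCLike.norm_conj]
    exact mul_le_mul_of_nonneg_right (hC z trivial) (norm_nonneg _)
  set h : Circle → ℂ := fun z => (N : ℂ)⁻¹ * ∑ᶠ w ∈ {w : Circle | w ^ N = z}, g w with hh
  have hpow : ∀ z, h (z ^ N) =
      (N : ℂ)⁻¹ * ∑ ζ : rootsOfUnity N Circle, g (((ζ : Circleˣ) : Circle) * z) := by
    intro z
    simp only [hh]
    rw [aux_finsum]
  have hgζ : ∀ ζ : rootsOfUnity N Circle,
      MemLp (fun z => g (((ζ : Circleˣ) : Circle) * z)) 2 μ := fun ζ =>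
    hgL.comp_measurePreserving (measurePreserving_mul_left μ ((ζ : Circleˣ) : Circle))
  have hhm : StronglyMeasurable h := by
    have : h = fun z =>
        (N : ℂ)⁻¹ * ∑ ζ : rootsOfUnity N Circle, g (((ζ : Circleˣ) : Circle) * s z) := by
      funext z
      rw [← hpow, hs]
    rw [this]
    refine stronglyMeasurable_const.mul (Finset.stronglyMeasurable_fun_sum _ fun ζ _ => ?_)
    exact hgm.comp_measurable (hsm.const_mul _)
  have hhL : MemLp h 2 μ := by
    rw [← hp.map_eq]
    rw [memLp_map_measure_iff hhm.aestronglyMeasurable hp.measurable.aemeasurable]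
    have : h ∘ (fun z : Circle => z ^ N) = fun z =>
        (N : ℂ)⁻¹ * ∑ ζ : rootsOfUnity N Circle, g (((ζ : Circleˣ) : Circle) * z) := by
      funext z
      exact hpow z
    rw [this]
    exact (memLp_finsetSum _ fun ζ _ => hgζ ζ).const_mul _
  have key : ContinuousLinearMap.adjoint S f = hhL.toLp h := by
    refine ext_inner_right ℂ fun u => ?_
    rw [ContinuousLinearMap.adjoint_inner_left, L2.inner_def, L2.inner_def]
    have hum : StronglyMeasurable (u : Circle → ℂ) := Lp.stronglyMeasurable u
    have huL : MemLp (fun z => (u : Circle → ℂ) (z ^ N)) 2 μ :=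
      (Lp.memLp u).comp_measurePreserving hp
    have hL : ∫ a, inner ℂ ((f : Circle → ℂ) a) ((S u : Circle → ℂ) a) ∂μ
        = ∫ a, (u : Circle → ℂ) (a ^ N) * (starRingEnd ℂ) (g a) ∂μ := by
      refine integral_congr_ae ?_
      filter_upwards [hS u] with a ha
      rw [ha]
      simp only [RCLike.inner_apply, hg, map_mul, RCLike.conj_conj]
      ring
    have hR : ∫ a, inner ℂ ((hhL.toLp h : Circle → ℂ) a) ((u : Circle → ℂ) a) ∂μ
        = ∫ a, (u : Circle → ℂ) a * (starRingEnd ℂ) (h a) ∂μ := by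
      refine integral_congr_ae ?_
      filter_upwards [hhL.coeFn_toLp] with a ha
      rw [ha]
      simp only [RCLike.inner_apply]
    have hsm2 : StronglyMeasurable fun a => (u : Circle → ℂ) a * (starRingEnd ℂ) (h a) :=
      hum.mul (Complex.continuous_conj.comp_stronglyMeasurable hhm)
    have hterm : ∀ ζ : rootsOfUnity N Circle,
        ∫ a, (u : Circle → ℂ) (a ^ N) * (starRingEnd ℂ) (g (((ζ : Circleˣ) : Circle) * a)) ∂μ
          = ∫ a, (u : Circle → ℂ) (a ^ N) * (starRingEnd ℂ) (g a) ∂μ := by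
      intro ζ
      have h2 : ((ζ : Circleˣ) : Circle) ^ N = 1 := by
        have h := ζ.2
        rw [mem_rootsOfUnity] at h
        rw [← Units.val_pow_eq_pow_val, h, Units.val_one]
      rw [← integral_mul_left_eq_self
        (fun a => (u : Circle → ℂ) (a ^ N) * (starRingEnd ℂ) (g a)) ((ζ : Circleˣ) : Circle)]
      simp only [mul_pow, h2, one_mul]
    have hint : ∀ ζ : rootsOfUnity N Circle, Integrable (fun a =>
        (u : Circle → ℂ) (a ^ N) * (starRingEnd ℂ) (g (((ζ : Circleˣ) : Circle) * a))) μ :=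
      fun ζ => huL.integrable_mul (hgζ ζ).star
    rw [hL, hR]
    have hmap : ∀ F : Circle → ℂ, StronglyMeasurable F →
        ∫ a, F a ∂μ = ∫ a, F (a ^ N) ∂μ := by
      intro F hF
      have h1 := integral_map_of_stronglyMeasurable (μ := μ) hp.measurable hF
      rwa [hp.map_eq] at h1
    rw [hmap _ hsm2]
    have hexp : ∀ a : Circle, (u : Circle → ℂ) (a ^ N) * (starRingEnd ℂ) (h (a ^ N)) =
        (N : ℂ)⁻¹ * ∑ ζ : rootsOfUnity N Circle,
          (u : Circle → ℂ) (a ^ N) * (starRingEnd ℂ) (g (((ζ : Circleˣ) : Circle) * a)) := by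
      intro a
      rw [hpow, map_mul, map_sum, map_inv₀, Complex.conj_natCast, ← Finset.mul_sum]
      ring
    simp only [hexp]
    rw [integral_const_mul, integral_finsetSum _ fun ζ _ => hint ζ]
    simp only [hterm]
    rw [Finset.sum_const, Finset.card_univ, aux_card, nsmul_eq_mul, ← mul_assoc,
      inv_mul_cancel₀ (by exact_mod_cast hN0), one_mul]
  rw [key]
  exact hhL.coeFn_toLp
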